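/- Let B > 0, a > 0, p₀ ∈ ℝ, let b : ℝ → ℝ be bounded and measurable with support contained in [−a, a], set A(x) := ∫₀ˣ b(t) dt and a⁻ := A(−a). Then there exist constants C > 0 and E₁ > 0 such that for all E ≥ E₁, ∫_{−a}^{a} | √(max(E − (p₀ + Bx + A(x))², 0)) − √(max(E − (p₀ + Bx + a⁻)², 0)) | dx ≤ C·E^{−1/2}. -/

import Mathlib

open MeasureTheory

/-!
If `0 ≤ p ≤ √E` and `E - p ^ 2 ≤ u ^ 2`, then `√E * (√E - p) ≤ E - p ^ 2 ≤ u ^ 2`, so that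
`√E - u ^ 2 / √E ≤ p ≤ √E`. On a compact set the quantities `p₀ + B x + A x` and
`p₀ + B x + A (-a)` are bounded by a constant `R`, hence both square roots of the statement
lie in the interval `[√E - R ^ 2 / √E, √E]`, whose length is `O(E ^ (-1/2))`.
-/

/-- The nonnegative momentum `p` at energy `E` of a classical particle with Hamiltonian
`p ^ 2 + u ^ 2`; it is set to `0` in the classically forbidden region `E < u ^ 2`. -/
noncomputable def classicalMomentum (E u : ℝ) : ℝ :=
  √(max (E - u ^ 2) 0)

section Pointwise

variable {E u v R : ℝ}

lemma classicalMomentum_le_sqrt (hE : 0 ≤ E) : classicalMomentum E u ≤ √E :=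
  Real.sqrt_le_sqrt (max_le (sub_le_self E (sq_nonneg u)) hE)

lemma sub_sq_le_classicalMomentum_sq : E - u ^ 2 ≤ classicalMomentum E u ^ 2 := by
  rw [classicalMomentum, Real.sq_sqrt (le_max_right _ _)]
  exact le_max_left _ _

lemma sqrt_sub_classicalMomentum_le (hE : 0 < E) : √E - classicalMomentum E u ≤ u ^ 2 / √E := by
  have momentum_nonneg : 0 ≤ classicalMomentum E u := Real.sqrt_nonneg _
  rw [le_div_iff₀ (Real.sqrt_pos.2 hE)]
  calc (√E - classicalMomentum E u) * √E
      = E - classicalMomentum E u * √E := by rw [sub_mul, Real.mul_self_sqrt hE.le]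
    _ ≤ E - classicalMomentum E u * classicalMomentum E u := by
        gcongr
        exact classicalMomentum_le_sqrt hE.le
    _ ≤ u ^ 2 := by linarith [sub_sq_le_classicalMomentum_sq (E := E) (u := u)]

lemma sqrt_sub_sq_div_sqrt_le_classicalMomentum (hE : 0 < E) (hu : |u| ≤ R) :
    √E - R ^ 2 / √E ≤ classicalMomentum E u := by
  have : u ^ 2 / √E ≤ R ^ 2 / √E := by
    gcongr ?_ / _
    exact sq_le_sq' (abs_le.1 hu).1 (abs_le.1 hu).2
  linarith [sqrt_sub_classicalMomentum_le (u := u) hE]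

lemma abs_classicalMomentum_sub_le (hE : 0 < E) (hu : |u| ≤ R) (hv : |v| ≤ R) :
    |classicalMomentum E u - classicalMomentum E v| ≤ R ^ 2 / √E := by
  simpa only [sub_sub_cancel] using abs_sub_le_of_le_of_le
    (sqrt_sub_sq_div_sqrt_le_classicalMomentum hE hu) (classicalMomentum_le_sqrt hE.le)
    (sqrt_sub_sq_div_sqrt_le_classicalMomentum hE hv) (classicalMomentum_le_sqrt hE.le)

end Pointwise

section Integrated

variable {X : Type*} [MeasurableSpace X] {μ : Measure X} {s : Set X} {u v : X → ℝ}

lemma setIntegral_abs_classicalMomentum_sub_le {E R : ℝ} (hE : 0 < E) (hs : μ s < ⊤)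
    (hu : ∀ x ∈ s, |u x| ≤ R) (hv : ∀ x ∈ s, |v x| ≤ R) :
    ∫ x in s, |classicalMomentum E (u x) - classicalMomentum E (v x)| ∂μ ≤
      R ^ 2 / √E * μ.real s := by
  refine (Real.le_norm_self _).trans (norm_setIntegral_le_of_norm_le_const hs fun x hx ↦ ?_)
  rw [Real.norm_eq_abs, abs_abs]
  exact abs_classicalMomentum_sub_le hE (hu x hx) (hv x hx)

lemma exists_setIntegral_abs_classicalMomentum_sub_le_of_isCompact [TopologicalSpace X]
    [IsFiniteMeasureOnCompacts μ] (hs : IsCompact s) (hu : ContinuousOn u s)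
    (hv : ContinuousOn v s) :
    ∃ C > 0, ∀ E > 0,
      ∫ x in s, |classicalMomentum E (u x) - classicalMomentum E (v x)| ∂μ ≤ C / √E := by
  obtain ⟨R, hR⟩ := hs.exists_bound_of_continuousOn (hu.prodMk hv)
  have hRu : ∀ x ∈ s, |u x| ≤ R := fun x hx ↦ (norm_fst_le (u x, v x)).trans (hR x hx)
  have hRv : ∀ x ∈ s, |v x| ≤ R := fun x hx ↦ (norm_snd_le (u x, v x)).trans (hR x hx)
  refine ⟨R ^ 2 * μ.real s + 1, by positivity, fun E hE ↦ ?_⟩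
  calc ∫ x in s, |classicalMomentum E (u x) - classicalMomentum E (v x)| ∂μ
      ≤ R ^ 2 / √E * μ.real s :=
        setIntegral_abs_classicalMomentum_sub_le hE hs.measure_lt_top hRu hRv
    _ = R ^ 2 * μ.real s / √E := div_mul_eq_mul_div _ _ _
    _ ≤ (R ^ 2 * μ.real s + 1) / √E := by
        gcongr
        exact le_add_of_nonneg_right zero_le_one

end Integrated

lemma intervalIntegrable_of_measurable_of_abs_le {μ : Measure ℝ} [IsLocallyFiniteMeasure μ]
    {f : ℝ → ℝ} {M : ℝ} (hf : Measurable f) (hM : ∀ x, |f x| ≤ M) (c d : ℝ) :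
    IntervalIntegrable f μ c d :=
  intervalIntegrable_const.mono_fun' hf.aestronglyMeasurable (ae_of_all _ hM)

theorem stmt_13_general (B a p₀ : ℝ) (ha : 0 < a) (b : ℝ → ℝ)
    (hb : IntervalIntegrable b volume (-a) a)
    (A : ℝ → ℝ) (hA : ∀ x ∈ Set.Icc (-a) a, A x = ∫ t in (0 : ℝ)..x, b t) :
    ∃ C > 0, ∀ E > 0,
      (∫ x in (-a)..a,
          |Real.sqrt (max (E - (p₀ + B * x + A x) ^ 2) 0) -
            Real.sqrt (max (E - (p₀ + B * x + A (-a)) ^ 2) 0)|) ≤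
        C / Real.sqrt E := by
  have neg_a_le_a : -a ≤ a := by linarith
  have zero_mem : (0 : ℝ) ∈ Set.uIcc (-a) a := Set.mem_uIcc_of_le (by linarith) ha.le
  have A_cont : ContinuousOn A (Set.Icc (-a) a) := by
    have primitive_cont := intervalIntegral.continuousOn_primitive_interval' hb zero_mem
    rw [Set.uIcc_of_le neg_a_le_a] at primitive_cont
    exact primitive_cont.congr hA
  have affine_cont : ContinuousOn (fun x ↦ p₀ + B * x) (Set.Icc (-a) a) := by fun_prop
  simp only [intervalIntegral.integral_of_le neg_a_le_a, ← integral_Icc_eq_integral_Ioc]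
  exact exists_setIntegral_abs_classicalMomentum_sub_le_of_isCompact isCompact_Icc
    (affine_cont.add A_cont) (affine_cont.add continuousOn_const)

/-- The contribution of the strip [−a, a] in the Bohr–Sommerfeld comparison is
O(E^{−1/2}) as E → ∞. -/
theorem stmt_13 (B a p₀ : ℝ) (hB : 0 < B) (ha : 0 < a)
    (b : ℝ → ℝ) (hb_meas : Measurable b) (hb_bd : ∃ M : ℝ, ∀ x : ℝ, |b x| ≤ M)
    (hb_supp : Function.support b ⊆ Set.Icc (-a) a)
    (A : ℝ → ℝ) (hA : ∀ x : ℝ, A x = ∫ t in (0 : ℝ)..x, b t) :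
    ∃ C E₁ : ℝ, 0 < C ∧ 0 < E₁ ∧
      ∀ E : ℝ, E₁ ≤ E →
        (∫ x in (-a)..a,
            |Real.sqrt (max (E - (p₀ + B * x + A x) ^ 2) 0) -
              Real.sqrt (max (E - (p₀ + B * x + A (-a)) ^ 2) 0)|) ≤
          C / Real.sqrt E := by
  obtain ⟨M, hM⟩ := hb_bd
  obtain ⟨C, hC, bound⟩ := stmt_13_general B a p₀ ha b
    (intervalIntegrable_of_measurable_of_abs_le hb_meas hM _ _) A fun x _ ↦ hA x
  exact ⟨C, 1, hC, one_pos, fun E hE ↦ bound E (one_pos.trans_le hE)⟩
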